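/- Let Q be a finite quiver and d a dimension vector. The image of the quantum trace map consists of GL_d-invariant homogenized differential operators: Tr^q(N(Q)_ℏ) ⊆ (D_ℏ(Rep(Q,d)))^{GL_d}, where GL_d acts on differential operators by g·D = g∘D∘g⁻¹. -/

import Mathlib

open scoped TensorProduct

/-- A finite quiver: finite sets of vertices and arrows with source and target maps. -/
structure FinQuiver where
  V : Type
  A : Type
  [fintypeV : Fintype V]
  [fintypeA : Fintype A]
  [decEqV : DecidableEq V]
  [decEqA : DecidableEq A]
  src : A → V
  tgt : A → V

attribute [instance] FinQuiver.fintypeV FinQuiver.fintypeA FinQuiver.decEqV FinQuiver.decEqA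

/-- The double quiver `Q̄`: for each arrow `a` (encoded `Sum.inl a`) we add a reversed
arrow `a*` (encoded `Sum.inr a`). -/
@[reducible] def FinQuiver.double (Q : FinQuiver) : FinQuiver where
  V := Q.V
  A := Q.A ⊕ Q.A
  src := Sum.elim Q.src Q.tgt
  tgt := Sum.elim Q.tgt Q.src

namespace FinQuiver

variable (K : Type) [CommRing K] (Q : FinQuiver)

/-- The defining relations of the path algebra `KQ`, presented on the free algebra on
vertices (`Sum.inl`) and arrows (`Sum.inr`): the vertices are orthogonal idempotents summing
to `1`, and each arrow `a` satisfies `e_{t(a)} a = a = a e_{s(a)}`. -/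
inductive PathRel : FreeAlgebra K (Q.V ⊕ Q.A) → FreeAlgebra K (Q.V ⊕ Q.A) → Prop
  | vertex_mul (i j : Q.V) :
      PathRel (FreeAlgebra.ι K (Sum.inl i) * FreeAlgebra.ι K (Sum.inl j))
        (if i = j then FreeAlgebra.ι K (Sum.inl i) else 0)
  | src_mul (a : Q.A) :
      PathRel (FreeAlgebra.ι K (Sum.inr a) * FreeAlgebra.ι K (Sum.inl (Q.src a)))
        (FreeAlgebra.ι K (Sum.inr a))
  | tgt_mul (a : Q.A) :
      PathRel (FreeAlgebra.ι K (Sum.inl (Q.tgt a)) * FreeAlgebra.ι K (Sum.inr a))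
        (FreeAlgebra.ι K (Sum.inr a))
  | sum_vertices :
      PathRel (∑ i : Q.V, FreeAlgebra.ι K (Sum.inl i)) 1

/-- The path algebra `KQ` of a finite quiver, as an algebra presented by generators and
relations. -/
abbrev PathAlg := RingQuot (PathRel K Q)

/-- The idempotent `e_i` of a vertex in the path algebra. -/
noncomputable def vtx (i : Q.V) : PathAlg K Q :=
  RingQuot.mkAlgHom K (PathRel K Q) (FreeAlgebra.ι K (Sum.inl i))

/-- The element of the path algebra corresponding to an arrow. -/
noncomputable def arr (a : Q.A) : PathAlg K Q :=
  RingQuot.mkAlgHom K (PathRel K Q) (FreeAlgebra.ι K (Sum.inr a))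

/-- The product of the arrows in a word (a path, read from left to right). -/
noncomputable def pathProd (w : List Q.A) : PathAlg K Q := (w.map (arr K Q)).prod

/-- The canonical non-commutative moment map `w = ∑_{a ∈ Q₁} (a a* - a* a) ∈ KQ̄`. -/
noncomputable def momentElem : PathAlg K Q.double :=
  ∑ a : Q.A,
    (arr K Q.double (Sum.inl a) * arr K Q.double (Sum.inr a) -
      arr K Q.double (Sum.inr a) * arr K Q.double (Sum.inl a))

end FinQuiver

section Abelianization

variable (K : Type) [CommRing K] (A : Type) [Ring A] [Algebra K A]

/-- The `K`-span of all commutators `ab - ba` in an algebra `A`. -/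
def commSpan : Submodule K A :=
  Submodule.span K {x | ∃ a b : A, x = a * b - b * a}

/-- The "abelianization" `A_♮ = A/[A,A]` of an algebra (as a `K`-module). -/
abbrev AbQuot := A ⧸ commSpan K A

/-- The canonical projection `A → A_♮`. -/
def natProj : A →ₗ[K] AbQuot K A := (commSpan K A).mkQ

end Abelianization

namespace FinQuiver

variable (K : Type) [CommRing K] (Q : FinQuiver)

/-- The class in `(KQ̄)_♮` of a cyclic word of arrows in the double quiver. -/
noncomputable def wordClass (w : List Q.double.A) : AbQuot K (PathAlg K Q.double) :=
  natProj K _ (pathProd K Q.double w)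

/-- The preprojective algebra `ΠQ = KQ̄/(w)`: the quotient of `KQ̄` by the two-sided ideal
generated by the non-commutative moment map `w`. -/
abbrev Preproj := RingQuot (fun x y : PathAlg K Q.double => x = momentElem K Q ∧ y = 0)

/-- The canonical projection `KQ̄ → ΠQ`. -/
noncomputable def preprojProj : PathAlg K Q.double →ₐ[K] Preproj K Q :=
  RingQuot.mkAlgHom K _

/- Representation spaces. -/

/-- A dimension vector. -/
abbrev Dim (Q : FinQuiver) := Q.V → ℕ

variable (d : Dim Q)

/-- The space of `d`-dimensional representations of `Q`:
`Rep(Q,d) = ⊕_{a ∈ Q₁} Hom(K^{d_{s(a)}}, K^{d_{t(a)}})`. -/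
abbrev RepSpace := ∀ a : Q.A, Matrix (Fin (d (Q.tgt a))) (Fin (d (Q.src a))) K

/-- The Lie algebra `𝔤𝔩_d = ⊕_i 𝔤𝔩_{d_i}`. -/
abbrev glD := ∀ i : Q.V, Matrix (Fin (d i)) (Fin (d i)) K

/-- The group `GL_d = ∏_i GL_{d_i}`. -/
abbrev GLD := ∀ i : Q.V, GL (Fin (d i)) K

/-- The "big" index set `⊔_i {1,…,d_i}`, indexing the rows/columns of a representation of the
full path algebra as one big matrix. -/
abbrev BIdx := Σ i : Q.V, Fin (d i)

/-- The matrix attached to an arrow `a ∈ Q₁` by a representation of the double quiver. -/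
def arrMat (ρ : RepSpace K Q.double d) (a : Q.A) :
    Matrix (Fin (d (Q.tgt a))) (Fin (d (Q.src a))) K := ρ (Sum.inl a)

/-- The matrix attached to a reversed arrow `a* ∈ Q̄₁` by a representation of the double
quiver. -/
def astMat (ρ : RepSpace K Q.double d) (a : Q.A) :
    Matrix (Fin (d (Q.src a))) (Fin (d (Q.tgt a))) K := ρ (Sum.inr a)

/-- The moment map `μ : Rep(Q̄,d) → 𝔤𝔩_d`, `ρ ↦ ∑_{a ∈ Q₁} [ρ(a), ρ(a*)]`. -/
noncomputable def momentMapFun (ρ : RepSpace K Q.double d) : glD K Q d := fun i =>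
  (∑ a : Q.A,
      if h : Q.tgt a = i then
        (arrMat K Q d ρ a * astMat K Q d ρ a).submatrix
          (Fin.cast (congrArg d h.symm)) (Fin.cast (congrArg d h.symm))
      else 0) -
  ∑ a : Q.A,
      if h : Q.src a = i then
        (astMat K Q d ρ a * arrMat K Q d ρ a).submatrix
          (Fin.cast (congrArg d h.symm)) (Fin.cast (congrArg d h.symm))
      else 0

/-- Index set for the coordinate functions `(a)_{uv}` on `Rep(Q,d)`. -/
abbrev CoordIdx := Σ a : Q.A, Fin (d (Q.tgt a)) × Fin (d (Q.src a))

/-- The coordinate ring `K[Rep(Q,d)]`, a polynomial ring on the matrix entries. -/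
abbrev CoordRing := MvPolynomial (CoordIdx Q d) K

/-- The entries of any "matrix-valued assignment" on arrows, spread out over the big index
set `BIdx`; entries outside the correct blocks are `0`. -/
def bigMat {S : Type} [Zero S]
    (e : (c : Q.A) → Fin (d (Q.tgt c)) → Fin (d (Q.src c)) → S) (c : Q.A) :
    Matrix (BIdx Q d) (BIdx Q d) S := fun p q =>
  if h : p.1 = Q.tgt c ∧ q.1 = Q.src c then
    e c (Fin.cast (congrArg d h.1) p.2) (Fin.cast (congrArg d h.2) q.2)
  else 0

/-- `wordTrace e w` is `tr(M(c₁) ⋯ M(c_r))` for a word `w = c₁ ⋯ c_r` of arrows, where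
`M(c)` is the big matrix with entries `e c u v`. -/
noncomputable def wordTrace {S : Type} [Ring S]
    (e : (c : Q.A) → Fin (d (Q.tgt c)) → Fin (d (Q.src c)) → S) (w : List Q.A) : S :=
  Matrix.trace ((w.map (bigMat Q d e)).prod)

end FinQuiver

namespace FinQuiver

variable (K : Type) [Field K] (Q : FinQuiver) (d : Dim Q)

/-- The polynomial ring `K[ℏ][Rep(Q,d)]`, i.e. the coordinate ring of `Rep(Q,d)` with an
extra central homogenizing variable `ℏ` (the polynomial variable of `Polynomial K`). -/
abbrev PolyH := MvPolynomial (CoordIdx Q d) (Polynomial K)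

/-- `K`-linear endomorphisms of `K[ℏ][Rep(Q,d)]`; the homogenized differential operators
`D_ℏ(Rep(Q,d))` are realized inside this algebra. -/
def EndH : Type := Module.End K (PolyH K Q d)

noncomputable instance : Ring (EndH K Q d) :=
  inferInstanceAs (Ring (Module.End K (PolyH K Q d)))

noncomputable instance : Algebra K (EndH K Q d) :=
  inferInstanceAs (Algebra K (Module.End K (PolyH K Q d)))

/-- Multiplication operator by a polynomial. -/
noncomputable def mulOpH (f : PolyH K Q d) : EndH K Q d := LinearMap.mulLeft K f

/-- The inclusion `K[Rep(Q,d)] → K[ℏ][Rep(Q,d)]`. -/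
noncomputable def embH : CoordRing K Q d →+* PolyH K Q d :=
  MvPolynomial.map Polynomial.C

/-- The operator `∂/∂x_c`. -/
noncomputable def derOp (c : CoordIdx Q d) : EndH K Q d :=
  ((MvPolynomial.pderiv c).toLinearMap.restrictScalars K : PolyH K Q d →ₗ[K] PolyH K Q d)

/-- The operator `ℏ·1` (multiplication by the homogenizing variable `ℏ`). -/
noncomputable def hbarOp : EndH K Q d := mulOpH K Q d (MvPolynomial.C Polynomial.X)

/-- The degree-one generator `ℏ·∂/∂x_c` of `D_ℏ(Rep(Q,d))`; it satisfies
`X * f - f * X = ℏ X(f)` as required in the definition of the homogenized differential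
operators. -/
noncomputable def hDer (c : CoordIdx Q d) : EndH K Q d :=
  hbarOp K Q d * derOp K Q d c

/-- The homogenized differential operator algebra `D_ℏ(Rep(Q,d))`: the graded
`K[ℏ]`-algebra generated by the coordinate ring `K[Rep(Q,d)]` in degree `0` and the
derivations of `K[Rep(Q,d)]` in degree `1` (a derivation `X` being realized as the
operator `ℏ·X`, so that `X * f - f * X = ℏ X(f)` and `X * Y - Y * X = ℏ [X,Y]`). -/
noncomputable def DiffOpsH : Subalgebra K (EndH K Q d) :=
  Algebra.adjoin K
    ({D | ∃ f : CoordRing K Q d, D = mulOpH K Q d (embH K Q d f)} ∪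
      {D | ∃ v : CoordIdx Q d → CoordRing K Q d,
        D = ∑ c, mulOpH K Q d (embH K Q d (v c)) * hDer K Q d c})

/-- For `g ∈ GL_d`, the pullback along the conjugation action on `Rep(Q,d)`: the algebra
endomorphism of `K[ℏ][Rep(Q,d)]` with `(a)_{uv} ↦ ((g_{t(a)})⁻¹ ρ(a) g_{s(a)})_{uv}`. -/
noncomputable def glPullback (g : GLD K Q d) : PolyH K Q d →ₐ[Polynomial K] PolyH K Q d :=
  MvPolynomial.aeval fun c =>
    ∑ k, ∑ l,
      (MvPolynomial.C (Polynomial.C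
          ((((g (Q.tgt c.1))⁻¹ : GL (Fin (d (Q.tgt c.1))) K) : Matrix _ _ K) c.2.1 k *
            ((g (Q.src c.1) : Matrix _ _ K) l c.2.2))) : PolyH K Q d) *
        MvPolynomial.X ⟨c.1, (k, l)⟩

/-- A (differential) operator `D` is `GL_d`-invariant, for the action `g·D = g ∘ D ∘ g⁻¹`,
iff it commutes with the pullback of every group element. -/
def IsInvH (D : EndH K Q d) : Prop :=
  ∀ g : GLD K Q d,
    ((glPullback K Q d g).toLinearMap.restrictScalars K) ∘ₗ
        (D : Module.End K (PolyH K Q d)) =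
      (D : Module.End K (PolyH K Q d)) ∘ₗ
        ((glPullback K Q d g).toLinearMap.restrictScalars K)

/-- The entries `[x]_{uv}` of arrows of the double quiver acting as homogenized
differential operators: `[a]_{uv}` is multiplication by the coordinate `(a)_{uv}` and
`[a*]_{uv}` is `ℏ·∂/∂(a)_{vu}`. -/
noncomputable def qEntry :
    (c : Q.double.A) → Fin (d (Q.double.tgt c)) → Fin (d (Q.double.src c)) → EndH K Q d
  | Sum.inl a, u, v => mulOpH K Q d (MvPolynomial.X ⟨a, (u, v)⟩)
  | Sum.inr a, u, v => hDer K Q d ⟨a, (v, u)⟩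

/-- Schedler's quantum trace of a cyclic word `w = a₁ ⋯ a_r` of arrows of `Q̄` (with
heights increasing from left to right): `tr([a₁] [a₂] ⋯ [a_r])`. -/
noncomputable def qWordTrace (w : List Q.double.A) : EndH K Q d :=
  wordTrace Q.double d (qEntry K Q d) w

end FinQuiver

/-!
Let `n = ∑ dᵢ`.  A word `w` in the arrows of `Q̄` gives an operator on `Kⁿ ⊗ K[ℏ][Rep(Q,d)]`,
namely the product of the matrices `([a]_{uv})` over its letters `a`, and `Tr^q w` is its partial
trace over `Kⁿ`.  An element `g ∈ GL_d` acts diagonally by `g ⊗ P_g`, where `P_g` is the pullback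
of polynomials.  Each letter commutes with this diagonal action: for `a ∈ Q₁` this is the
definition of `P_g`, for `a*` it is the chain rule.  Hence so does the product of the letters, and
the partial trace over `Kⁿ` of an operator commuting with `g ⊗ P_g` commutes with `P_g`.
-/

section PartialTrace

variable {R S m n : Type*} [CommSemiring R] [Semiring S] [Algebra R S] [Fintype m] [Fintype n]

theorem trace_map_algebraMap_mul_comm (A : Matrix m n R) (B : Matrix n m S) :
    (A.map (algebraMap R S) * B).trace = (B * A.map (algebraMap R S)).trace := by
  simp only [Matrix.trace, Matrix.diag, Matrix.mul_apply, Matrix.map_apply, Algebra.commutes]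
  exact Finset.sum_comm

theorem map_smul_mul_eq_mul_map_smul_of_apply {V : Type*} [Semiring V] [Algebra R V]
    {A : Matrix m m R} {B : Matrix n n R} {P : Module.End R V} {M : Matrix m n (Module.End R V)}
    (h : ∀ p, A.map (algebraMap R V) * M.map (fun D => P (D p)) =
      M.map (fun D => D (P p)) * B.map (algebraMap R V)) :
    A.map (· • P) * M = M * B.map (· • P) := by
  ext i j p
  simpa [Matrix.mul_apply, ← Algebra.smul_def, ← Algebra.commutes] using
    Matrix.ext_iff.mpr (h p) i j

variable [DecidableEq n] (G : (Matrix n n R)ˣ)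

theorem map_algebraMap_mul_map_algebraMap_inv :
    G.val.map (algebraMap R S) * G⁻¹.val.map (algebraMap R S) = 1 := by
  rw [← Matrix.map_mul, Units.mul_inv, Matrix.map_one _ (map_zero _) (map_one _)]

theorem map_algebraMap_inv_mul_map_algebraMap :
    G⁻¹.val.map (algebraMap R S) * G.val.map (algebraMap R S) = 1 := by
  rw [← Matrix.map_mul, Units.inv_mul, Matrix.map_one _ (map_zero _) (map_one _)]

theorem commute_trace_of_commute_map_smul (x : S) {N : Matrix n n S}
    (h : Commute (G.val.map (· • x)) N) : Commute x N.trace := by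
  let H : Matrix n n S := G.val.map (algebraMap R S)
  let H' : Matrix n n S := G⁻¹.val.map (algebraMap R S)
  let X : Matrix n n S := Matrix.diagonal fun _ => x
  have smul_eq : G.val.map (· • x) = H * X := by
    ext i j
    simp [H, X, Algebra.smul_def]
  have comm_X : H * X = X * H := by
    ext i j
    simp [H, X, Algebra.commutes]
  have comm_N : H * X * N = N * (X * H) := by
    rw [← comm_X, ← smul_eq, h.eq]
  calc x * N.trace = (X * N).trace := by
        rw [← Matrix.smul_eq_diagonal_mul, Matrix.trace_smul, smul_eq_mul]
    _ = (H' * (H * X * N)).trace := by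
        rw [mul_assoc, ← mul_assoc, map_algebraMap_inv_mul_map_algebraMap, one_mul]
    _ = (H * X * N * H').trace := trace_map_algebraMap_mul_comm _ _
    _ = (N * X).trace := by
        rw [comm_N, mul_assoc, mul_assoc, map_algebraMap_mul_map_algebraMap_inv, mul_one]
    _ = N.trace * x := by
        rw [← Matrix.op_smul_eq_mul_diagonal, Matrix.trace_smul, op_smul_eq_mul]

end PartialTrace

theorem derivation_algHom_mvPolynomial {R A M σ : Type*} [CommSemiring R] [CommSemiring A]
    [Algebra R A] [AddCommMonoid M] [Module R M] [Module A M] [Fintype σ]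
    (D : Derivation R A M) (φ : MvPolynomial σ R →ₐ[R] A) (p : MvPolynomial σ R) :
    D (φ p) = ∑ i, φ (MvPolynomial.pderiv i p) • D (φ (MvPolynomial.X i)) := by
  classical
  induction p using MvPolynomial.induction_on with
  | C r => simp [← MvPolynomial.algebraMap_eq]
  | add p q hp hq => simp only [map_add, hp, hq, add_smul, Finset.sum_add_distrib]
  | mul_X p j hp =>
    simp [hp, add_smul, Finset.sum_add_distrib, Finset.smul_sum, MvPolynomial.pderiv_X,
      Pi.single_apply, mul_smul, apply_ite φ, ite_smul]

namespace FinQuiver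

section BigMatrix

variable {S : Type} (Q : FinQuiver) (d : Dim Q)

theorem commute_blockDiagonal'_bigMat [NonUnitalNonAssocSemiring S]
    (A : ∀ i, Matrix (Fin (d i)) (Fin (d i)) S)
    (e : (c : Q.A) → Fin (d (Q.tgt c)) → Fin (d (Q.src c)) → S) (c : Q.A)
    (h : A (Q.tgt c) * Matrix.of (e c) = Matrix.of (e c) * A (Q.src c)) :
    Commute (Matrix.blockDiagonal' A) (bigMat Q d e c) := by
  have mul_left (i j u v) : (Matrix.blockDiagonal' A * bigMat Q d e c) ⟨i, u⟩ ⟨j, v⟩ =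
      ∑ k, A i u k * bigMat Q d e c ⟨i, k⟩ ⟨j, v⟩ := by
    rw [Matrix.mul_apply, Fintype.sum_sigma, Fintype.sum_eq_single i fun b hb => by
      simp [Matrix.blockDiagonal'_apply_ne A _ _ hb.symm]]
    simp
  have mul_right (i j u v) : (bigMat Q d e c * Matrix.blockDiagonal' A) ⟨i, u⟩ ⟨j, v⟩ =
      ∑ l, bigMat Q d e c ⟨i, u⟩ ⟨j, l⟩ * A j l v := by
    rw [Matrix.mul_apply, Fintype.sum_sigma, Fintype.sum_eq_single j fun b hb => by
      simp [Matrix.blockDiagonal'_apply_ne A _ _ hb]]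
    simp
  ext ⟨i, u⟩ ⟨j, v⟩
  rw [mul_left, mul_right]
  by_cases hij : i = Q.tgt c ∧ j = Q.src c
  · obtain ⟨rfl, rfl⟩ := hij
    simpa [bigMat, Matrix.mul_apply] using Matrix.ext_iff.mpr h u v
  · simp [bigMat, hij]

theorem wordTrace_mem {R : Type*} [CommSemiring R] [Ring S] [Algebra R S] (B : Subalgebra R S)
    {e : (c : Q.A) → Fin (d (Q.tgt c)) → Fin (d (Q.src c)) → S} (he : ∀ c u v, e c u v ∈ B)
    (w : List Q.A) : wordTrace Q d e w ∈ B := by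
  have bigMat_mem (c : Q.A) : bigMat Q d e c ∈ B.matrix := fun p q => by
    unfold bigMat
    split_ifs
    exacts [he c _ _, B.zero_mem]
  have prod_mem : (w.map (bigMat Q d e)).prod ∈ B.matrix :=
    Subalgebra.list_prod_mem _ <| List.forall_mem_map.mpr fun c _ => bigMat_mem c
  exact B.sum_mem fun p _ => prod_mem p p

end BigMatrix

variable {K : Type} [Field K] {Q : FinQuiver} {d : Dim Q}

/-- `g ∈ GL_d` as an invertible block diagonal matrix on the big index set. -/
def bigUnit (g : GLD K Q d) : (Matrix (BIdx Q d) (BIdx Q d) K)ˣ :=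
  Units.map (Matrix.blockDiagonal'RingHom _ K).toMonoidHom (MulEquiv.piUnits.symm g)

section Pullback

/-- The generic matrix of an arrow `a`, with entries the coordinate functions `(a)_{uv}`. -/
noncomputable def coordMat (K : Type) [Field K] (Q : FinQuiver) (d : Dim Q) (a : Q.A) :
    Matrix (Fin (d (Q.tgt a))) (Fin (d (Q.src a))) (PolyH K Q d) :=
  .of fun u v => MvPolynomial.X ⟨a, (u, v)⟩

/-- The gradient of `f` in the direction of an arrow `a`, as a matrix.  It is transposed, with
`∂f/∂(a)_{vu}` in position `(u, v)`, so that it has the shape of a matrix attached to `a*`. -/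
noncomputable def gradMat (a : Q.A) (f : PolyH K Q d) :
    Matrix (Fin (d (Q.src a))) (Fin (d (Q.tgt a))) (PolyH K Q d) :=
  .of fun u v => MvPolynomial.pderiv ⟨a, (v, u)⟩ f

theorem glPullback_X (g : GLD K Q d) (a : Q.A) (u : Fin (d (Q.tgt a))) (v : Fin (d (Q.src a))) :
    glPullback K Q d g (MvPolynomial.X ⟨a, (u, v)⟩) =
      ∑ k, ∑ l, ((g (Q.tgt a))⁻¹.val u k * (g (Q.src a)).val l v) • coordMat K Q d a k l := by
  rw [glPullback, MvPolynomial.aeval_X]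
  refine Finset.sum_congr rfl fun k _ => Finset.sum_congr rfl fun l _ => ?_
  rw [Algebra.smul_def]
  rfl

theorem map_glPullback_coordMat (g : GLD K Q d) (a : Q.A) :
    (coordMat K Q d a).map (glPullback K Q d g) =
      (g (Q.tgt a))⁻¹.val.map (algebraMap K (PolyH K Q d)) * coordMat K Q d a *
        (g (Q.src a)).val.map (algebraMap K (PolyH K Q d)) := by
  ext1 u v
  rw [Matrix.map_apply, coordMat, Matrix.of_apply, glPullback_X, Finset.sum_comm]
  simp only [coordMat, Matrix.mul_apply, Matrix.map_apply, Finset.sum_mul, Algebra.smul_def,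
    map_mul]
  exact Finset.sum_congr rfl fun l _ => Finset.sum_congr rfl fun k _ => by ring

theorem pderiv_glPullback_X_self (g : GLD K Q d) (a : Q.A) (k u : Fin (d (Q.tgt a)))
    (l v : Fin (d (Q.src a))) :
    MvPolynomial.pderiv ⟨a, (k, l)⟩ (glPullback K Q d g (MvPolynomial.X ⟨a, (u, v)⟩)) =
      algebraMap K (PolyH K Q d) ((g (Q.tgt a))⁻¹.val u k * (g (Q.src a)).val l v) := by
  simp only [glPullback_X, coordMat, Matrix.of_apply, map_sum, Derivation.map_smul_of_tower,
    MvPolynomial.pderiv_X]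
  rw [Fintype.sum_eq_single k fun i hi => by simp [hi],
    Fintype.sum_eq_single l fun j hj => by simp [hj]]
  simp [Algebra.smul_def]

theorem pderiv_glPullback_X_of_ne (g : GLD K Q d) {a b : Q.A} (hab : b ≠ a)
    (p : Fin (d (Q.tgt a)) × Fin (d (Q.src a))) (q : Fin (d (Q.tgt b)) × Fin (d (Q.src b))) :
    MvPolynomial.pderiv ⟨a, p⟩ (glPullback K Q d g (MvPolynomial.X ⟨b, q⟩)) = 0 := by
  obtain ⟨u, v⟩ := q
  have hne (x) : (⟨b, x⟩ : CoordIdx Q d) ≠ ⟨a, p⟩ := fun h => hab (congrArg Sigma.fst h)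
  simp [glPullback_X, coordMat, Derivation.map_smul_of_tower, MvPolynomial.pderiv_X_of_ne (hne _)]

theorem gradMat_glPullback (g : GLD K Q d) (a : Q.A) (f : PolyH K Q d) :
    gradMat a (glPullback K Q d g f) =
      (g (Q.src a)).val.map (algebraMap K (PolyH K Q d)) *
        (gradMat a f).map (glPullback K Q d g) *
          (g (Q.tgt a))⁻¹.val.map (algebraMap K (PolyH K Q d)) := by
  ext1 u v
  rw [gradMat, Matrix.of_apply, derivation_algHom_mvPolynomial, Fintype.sum_sigma,
    Fintype.sum_eq_single a fun b hb => by simp [pderiv_glPullback_X_of_ne g hb],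
    Fintype.sum_prod_type]
  simp only [pderiv_glPullback_X_self, gradMat, Matrix.mul_apply, Matrix.map_apply,
    Matrix.of_apply, Finset.sum_mul, smul_eq_mul, map_mul]
  exact Finset.sum_congr rfl fun k _ => Finset.sum_congr rfl fun l _ => by ring

end Pullback

section Operators

/-- The pullback `P_g` as an element of the operator algebra. -/
noncomputable def pullbackOp (g : GLD K Q d) : EndH K Q d :=
  (glPullback K Q d g).toLinearMap.restrictScalars K

/-- The diagonal action `g ⊗ P_g` on the block `K^{d_i} ⊗ K[ℏ][Rep(Q,d)]`, as a matrix of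
operators. -/
noncomputable def diagAction (g : GLD K Q d) (i : Q.V) :
    Matrix (Fin (d i)) (Fin (d i)) (EndH K Q d) :=
  (g i).val.map (· • pullbackOp g)

theorem diagAction_mul_map_mulOpH (g : GLD K Q d) (a : Q.A) :
    diagAction g (Q.tgt a) * (coordMat K Q d a).map (mulOpH K Q d) =
      (coordMat K Q d a).map (mulOpH K Q d) * diagAction g (Q.src a) := by
  refine map_smul_mul_eq_mul_map_smul_of_apply fun p => ?_
  change _ * (MulOpposite.op p • coordMat K Q d a).map (glPullback K Q d g) =
    (MulOpposite.op (glPullback K Q d g p) • coordMat K Q d a) * _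
  rw [op_smul_eq_smul, op_smul_eq_smul, Matrix.map_smulₛₗ _ (glPullback K Q d g) _ (map_mul _ _),
    Matrix.mul_smul, Matrix.smul_mul, map_glPullback_coordMat, Matrix.mul_assoc,
    ← Matrix.mul_assoc, map_algebraMap_mul_map_algebraMap_inv, Matrix.one_mul]

theorem diagAction_mul_of_hDer (g : GLD K Q d) (a : Q.A) :
    diagAction g (Q.src a) * Matrix.of (fun u v => hDer K Q d ⟨a, (v, u)⟩) =
      Matrix.of (fun u v => hDer K Q d ⟨a, (v, u)⟩) * diagAction g (Q.tgt a) := by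
  refine map_smul_mul_eq_mul_map_smul_of_apply fun p => ?_
  let hbar : PolyH K Q d := MvPolynomial.C Polynomial.X
  have glPullback_hbar : glPullback K Q d g hbar = hbar :=
    (glPullback K Q d g).commutes Polynomial.X
  change _ * (hbar • gradMat a p).map (glPullback K Q d g) =
    (hbar • gradMat a (glPullback K Q d g p)) * _
  rw [Matrix.map_smulₛₗ _ (glPullback K Q d g) _ (map_mul _ _), glPullback_hbar, Matrix.mul_smul,
    Matrix.smul_mul, gradMat_glPullback, Matrix.mul_assoc _ _ (Matrix.map _ _),
    map_algebraMap_inv_mul_map_algebraMap, Matrix.mul_one]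

theorem diagAction_mul_qEntry (g : GLD K Q d) (c : Q.double.A) :
    diagAction g (Q.double.tgt c) * Matrix.of (qEntry K Q d c) =
      Matrix.of (qEntry K Q d c) * diagAction g (Q.double.src c) :=
  match c with
  | .inl a => diagAction_mul_map_mulOpH g a
  | .inr a => diagAction_mul_of_hDer g a

theorem coe_bigUnit (g : GLD K Q d) :
    (bigUnit g : Matrix (BIdx Q d) (BIdx Q d) K) = Matrix.blockDiagonal' fun i => (g i).val :=
  rfl

theorem blockDiagonal'_diagAction (g : GLD K Q d) :
    Matrix.blockDiagonal' (diagAction g) = (bigUnit g).val.map (· • pullbackOp g) := by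
  rw [coe_bigUnit, Matrix.blockDiagonal'_map _ (· • pullbackOp g) (zero_smul K _)]
  rfl

theorem commute_pullbackOp_qWordTrace (g : GLD K Q d) (w : List Q.double.A) :
    Commute (pullbackOp g) (qWordTrace K Q d w) := by
  refine commute_trace_of_commute_map_smul (bigUnit g) _ ?_
  rw [← blockDiagonal'_diagAction]
  refine Commute.list_prod_right _ _ <| List.forall_mem_map.mpr fun c _ => ?_
  exact commute_blockDiagonal'_bigMat Q.double d _ _ c (diagAction_mul_qEntry g c)

theorem qEntry_mem_DiffOpsH (c : Q.double.A) (u : Fin (d (Q.double.tgt c)))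
    (v : Fin (d (Q.double.src c))) : qEntry K Q d c u v ∈ DiffOpsH K Q d := by
  cases c with
  | inl a =>
    exact Algebra.subset_adjoin (.inl ⟨MvPolynomial.X ⟨a, (u, v)⟩, by simp [qEntry, embH]⟩)
  | inr a =>
    have mulOpH_zero : mulOpH K Q d 0 = 0 := LinearMap.mulLeft_zero_eq_zero K _
    have mulOpH_one : mulOpH K Q d 1 = 1 := LinearMap.mulLeft_one K _
    refine Algebra.subset_adjoin (.inr ⟨Pi.single ⟨a, (v, u)⟩ 1, ?_⟩)
    rw [Fintype.sum_eq_single ⟨a, (v, u)⟩ fun b hb => by simp [hb, mulOpH_zero]]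
    simp [qEntry, mulOpH_one]

end Operators

section Invariants

variable (K Q d)

/-- The algebra `(D_ℏ(Rep(Q,d)))^{GL_d}` of invariant homogenized differential operators. -/
noncomputable def invDiffOpsH : Subalgebra K (EndH K Q d) :=
  DiffOpsH K Q d ⊓ Subalgebra.centralizer K (Set.range pullbackOp)

variable {K Q d}

theorem mem_invDiffOpsH {D : EndH K Q d} :
    D ∈ invDiffOpsH K Q d ↔ D ∈ DiffOpsH K Q d ∧ IsInvH K Q d D :=
  and_congr_right fun _ => Set.forall_mem_range

theorem qWordTrace_mem_invDiffOpsH (w : List Q.double.A) :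
    qWordTrace K Q d w ∈ invDiffOpsH K Q d :=
  mem_invDiffOpsH.mpr ⟨wordTrace_mem Q.double d _ qEntry_mem_DiffOpsH w,
    fun g => commute_pullbackOp_qWordTrace g w⟩

end Invariants

end FinQuiver

open FinQuiver in
theorem quantum_trace_image_GL_invariant_general
    (K : Type) [Field K] (Q : FinQuiver) (d : Dim Q) (ws : List (List Q.double.A)) :
    (ws.map (qWordTrace K Q d)).prod ∈ DiffOpsH K Q d ∧
      IsInvH K Q d (ws.map (qWordTrace K Q d)).prod :=
  mem_invDiffOpsH.mp <| Subalgebra.list_prod_mem _ <| List.forall_mem_map.mpr fun w _ =>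
    qWordTrace_mem_invDiffOpsH w

open FinQuiver in
/-- (Proposition 5.3.)  Let `Q` be a finite quiver and `d` a dimension
vector.  The image of the quantum trace map consists of `GL_d`-invariant homogenized
differential operators: `Tr^q(N(Q)_ℏ) ⊆ (D_ℏ(Rep(Q,d)))^{GL_d}`, where `GL_d` acts on
differential operators by `g·D = g ∘ D ∘ g⁻¹`.  (The image of `Tr^q` is the
`K[ℏ]`-span of the products `∏ᵢ tr(∏ⱼ [a_{ij}])` over finite families of cyclic words,
so the claim is that each such product lies in the invariant part of `D_ℏ(Rep(Q,d))`.) -/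
theorem quantum_trace_image_GL_invariant
    (K : Type) [Field K] [IsAlgClosed K] [CharZero K] (Q : FinQuiver) (d : Dim Q)
    (ws : List (List Q.double.A)) :
    ((ws.map (qWordTrace K Q d)).prod ∈ DiffOpsH K Q d) ∧
      IsInvH K Q d ((ws.map (qWordTrace K Q d)).prod) :=
  quantum_trace_image_GL_invariant_general K Q d ws
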